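/- Two formulas α and β are strongly equivalent (i.e., for every theory Δ, the theories {α} ∪ Δ and {β} ∪ Δ have the same equilibrium models) if and only if α ↔ β is X5-valid. -/

import Mathlib

open scoped Classical

namespace X5Paper

/-- Explicit literals: an atom `p` or its explicit negation `∼p`. -/
inductive XLit (At : Type) : Type
  | pos : At → XLit At
  | neg : At → XLit At

/-- A set of explicit literals is consistent if it contains no atom together
with its explicit negation. -/
def Consistent {At : Type} (T : Set (XLit At)) : Prop :=
  ∀ p : At, ¬ (XLit.pos p ∈ T ∧ XLit.neg p ∈ T)

/-- Nested expressions: ⊤, ⊥, atoms, ∧, ∨, default negation ¬, explicit negation ∼. -/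
inductive NExp (At : Type) : Type
  | top : NExp At
  | bot : NExp At
  | atom : At → NExp At
  | conj : NExp At → NExp At → NExp At
  | disj : NExp At → NExp At → NExp At
  | dneg : NExp At → NExp At
  | xneg : NExp At → NExp At

variable {At : Type}

mutual
/-- Satisfaction `T ⊨ F` of a nested expression by a set of explicit literals. -/
def NExp.sat (T : Set (XLit At)) : NExp At → Prop
  | .top => True
  | .bot => False
  | .atom p => XLit.pos p ∈ T
  | .conj F G => NExp.sat T F ∧ NExp.sat T G
  | .disj F G => NExp.sat T F ∨ NExp.sat T G
  | .dneg F => ¬ NExp.sat T F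
  | .xneg F => NExp.fals T F

/-- Falsification `T ⫤ F` of a nested expression by a set of explicit literals. -/
def NExp.fals (T : Set (XLit At)) : NExp At → Prop
  | .top => False
  | .bot => True
  | .atom p => XLit.neg p ∈ T
  | .conj F G => NExp.fals T F ∨ NExp.fals T G
  | .disj F G => NExp.fals T F ∧ NExp.fals T G
  | .dneg F => NExp.sat T F
  | .xneg F => NExp.sat T F
end

/-- The reduct `F^T` of a nested expression. -/
noncomputable def NExp.reduct (T : Set (XLit At)) : NExp At → NExp At
  | .top => .top
  | .bot => .bot
  | .atom p => .atom p
  | .conj F G => .conj (NExp.reduct T F) (NExp.reduct T G)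
  | .disj F G => .disj (NExp.reduct T F) (NExp.reduct T G)
  | .dneg F => if NExp.sat T F then .bot else .top
  | .xneg F => .xneg (NExp.reduct T F)

/-- Formulas: atoms, ⊥, ∧, ∨, →, explicit negation ∼. -/
inductive Frm (At : Type) : Type
  | atom : At → Frm At
  | bot : Frm At
  | conj : Frm At → Frm At → Frm At
  | disj : Frm At → Frm At → Frm At
  | impl : Frm At → Frm At → Frm At
  | xneg : Frm At → Frm At

/-- Default negation `¬φ := φ → ⊥`. -/
def Frm.neg (φ : Frm At) : Frm At := Frm.impl φ Frm.bot

/-- `⊤ := ¬⊥`. -/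
def Frm.top : Frm At := Frm.neg Frm.bot

/-- Weak equivalence `φ ↔ ψ := (φ→ψ) ∧ (ψ→φ)`. -/
def Frm.iff (φ ψ : Frm At) : Frm At := Frm.conj (Frm.impl φ ψ) (Frm.impl ψ φ)

/-- Strong equivalence connective `φ ⇔ ψ := (φ↔ψ) ∧ (∼φ↔∼ψ)`. -/
def Frm.siff (φ ψ : Frm At) : Frm At :=
  Frm.conj (Frm.iff φ ψ) (Frm.iff (Frm.xneg φ) (Frm.xneg ψ))

mutual
/-- X5 satisfaction `⟨H,T⟩ ⊨ φ`. -/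
def Sat : Set (XLit At) → Set (XLit At) → Frm At → Prop
  | H, _, .atom p => XLit.pos p ∈ H
  | _, _, .bot => False
  | H, T, .conj φ ψ => Sat H T φ ∧ Sat H T ψ
  | H, T, .disj φ ψ => Sat H T φ ∨ Sat H T ψ
  | H, T, .impl φ ψ => (Sat H T φ → Sat H T ψ) ∧ (Sat T T φ → Sat T T ψ)
  | H, T, .xneg φ => Fals H T φ

/-- X5 falsification `⟨H,T⟩ ⫤ φ`. -/
def Fals : Set (XLit At) → Set (XLit At) → Frm At → Prop
  | H, _, .atom p => XLit.neg p ∈ H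
  | _, _, .bot => True
  | H, T, .conj φ ψ => Fals H T φ ∨ Fals H T ψ
  | H, T, .disj φ ψ => Fals H T φ ∧ Fals H T ψ
  | H, T, .impl φ ψ => Sat T T φ ∧ Fals H T ψ
  | H, T, .xneg φ => Sat H T φ
end

/-- X5 validity: satisfied by every X5-interpretation `⟨H,T⟩`. -/
def X5Valid (φ : Frm At) : Prop :=
  ∀ H T : Set (XLit At), Consistent H → Consistent T → H ⊆ T → Sat H T φ

/-- Nested expressions viewed as formulas (`¬F := F → ⊥`, `⊤ := ¬⊥`). -/
def NExp.toFrm : NExp At → Frm At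
  | .top => Frm.top
  | .bot => .bot
  | .atom p => .atom p
  | .conj F G => .conj F.toFrm G.toFrm
  | .disj F G => .disj F.toFrm G.toFrm
  | .dneg F => Frm.neg F.toFrm
  | .xneg F => .xneg F.toFrm

/-- Uniform substitution `φ[α/p]`. -/
noncomputable def Frm.subst (p : At) (α : Frm At) : Frm At → Frm At
  | .atom q => if q = p then α else .atom q
  | .bot => .bot
  | .conj φ ψ => .conj (Frm.subst p α φ) (Frm.subst p α ψ)
  | .disj φ ψ => .disj (Frm.subst p α φ) (Frm.subst p α ψ)
  | .impl φ ψ => .impl (Frm.subst p α φ) (Frm.subst p α ψ)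
  | .xneg φ => .xneg (Frm.subst p α φ)

/-- A formula contains no explicit negation. -/
def NoXneg : Frm At → Prop
  | .atom _ => True
  | .bot => True
  | .conj φ ψ => NoXneg φ ∧ NoXneg ψ
  | .disj φ ψ => NoXneg φ ∧ NoXneg ψ
  | .impl φ ψ => NoXneg φ ∧ NoXneg ψ
  | .xneg _ => False

/-- HT satisfaction for (∼-free) formulas; the `∼` clause is a dummy. -/
def HTSat : Set At → Set At → Frm At → Prop
  | H, _, .atom p => p ∈ H
  | _, _, .bot => False
  | H, T, .conj φ ψ => HTSat H T φ ∧ HTSat H T ψ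
  | H, T, .disj φ ψ => HTSat H T φ ∨ HTSat H T ψ
  | H, T, .impl φ ψ => (HTSat H T φ → HTSat H T ψ) ∧ (HTSat T T φ → HTSat T T ψ)
  | _, _, .xneg _ => False

/-- HT validity for ∼-free formulas. -/
def HTValid (φ : Frm At) : Prop :=
  ∀ H T : Set At, H ⊆ T → HTSat H T φ

/-- Atom `p` occurs in a formula. -/
def Frm.occurs (p : At) : Frm At → Prop
  | .atom q => q = p
  | .bot => False
  | .conj φ ψ => Frm.occurs p φ ∨ Frm.occurs p ψ
  | .disj φ ψ => Frm.occurs p φ ∨ Frm.occurs p ψ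
  | .impl φ ψ => Frm.occurs p φ ∨ Frm.occurs p ψ
  | .xneg φ => Frm.occurs p φ

/-- Atom `p` occurs only outside the scope of explicit negation `∼`. -/
def OutsideXneg (p : At) : Frm At → Prop
  | .atom _ => True
  | .bot => True
  | .conj φ ψ => OutsideXneg p φ ∧ OutsideXneg p ψ
  | .disj φ ψ => OutsideXneg p φ ∧ OutsideXneg p ψ
  | .impl φ ψ => OutsideXneg p φ ∧ OutsideXneg p ψ
  | .xneg φ => ¬ Frm.occurs p φ

/-- A rule `F → G` of a program. -/
abbrev Rule (At : Type) := NExp At × NExp At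

/-- `T` is a model of a program: it satisfies the head whenever it satisfies the body. -/
def NModels (T : Set (XLit At)) (Prog : Set (Rule At)) : Prop :=
  ∀ r ∈ Prog, NExp.sat T r.1 → NExp.sat T r.2

/-- The reduct `Π^T` of a program. -/
noncomputable def progReduct (T : Set (XLit At)) (Prog : Set (Rule At)) : Set (Rule At) :=
  (fun r : Rule At => (NExp.reduct T r.1, NExp.reduct T r.2)) '' Prog

/-- `T` is an answer set of `Π`: a ⊆-minimal (consistent) model of the reduct `Π^T`. -/
def AnswerSet (Prog : Set (Rule At)) (T : Set (XLit At)) : Prop :=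
  Consistent T ∧ NModels T (progReduct T Prog) ∧
    ∀ T' : Set (XLit At), Consistent T' → T' ⊆ T → NModels T' (progReduct T Prog) → T' = T

/-- The theory corresponding to a program: each rule `F → G` read as an implication. -/
def ruleTheory (Prog : Set (Rule At)) : Set (Frm At) :=
  (fun r : Rule At => Frm.impl r.1.toFrm r.2.toFrm) '' Prog

/-- `⟨T,T⟩` is an equilibrium model of the theory `Γ`. -/
def EqModel (Γ : Set (Frm At)) (T : Set (XLit At)) : Prop :=
  Consistent T ∧ (∀ φ ∈ Γ, Sat T T φ) ∧
    ¬ ∃ H : Set (XLit At), Consistent H ∧ H ⊂ T ∧ ∀ φ ∈ Γ, Sat H T φ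

mutual
/-- Generalized Ferraris reduct `φ^T₊` of a formula (a nested expression). -/
noncomputable def redPos (T : Set (XLit At)) : Frm At → NExp At
  | .atom p => if XLit.pos p ∈ T then .atom p else .bot
  | .bot => .bot
  | .conj α β => if Sat T T (Frm.conj α β) then .conj (redPos T α) (redPos T β) else .bot
  | .disj α β => if Sat T T (Frm.disj α β) then .disj (redPos T α) (redPos T β) else .bot
  | .impl α β => if Sat T T (Frm.impl α β) then .disj (.dneg (redPos T α)) (redPos T β) else .bot
  | .xneg α => if Sat T T (Frm.xneg α) then .xneg (redNeg T α) else .bot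

/-- Generalized Ferraris reduct `φ^T₋` of a formula (a nested expression). -/
noncomputable def redNeg (T : Set (XLit At)) : Frm At → NExp At
  | .atom p => if XLit.neg p ∈ T then .atom p else .top
  | .bot => .bot
  | .conj α β => if Fals T T (Frm.conj α β) then .conj (redNeg T α) (redNeg T β) else .top
  | .disj α β => if Fals T T (Frm.disj α β) then .disj (redNeg T α) (redNeg T β) else .top
  | .impl α β => if Fals T T (Frm.impl α β) then redNeg T β else .top
  | .xneg α => if Fals T T (Frm.xneg α) then .xneg (redPos T α) else .top
end

mutual
/-- Generalized Ferraris reduct `F^T₊` of a nested expression. -/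
noncomputable def nRedPos (T : Set (XLit At)) : NExp At → NExp At
  | .top => .top
  | .bot => .bot
  | .atom p => if XLit.pos p ∈ T then .atom p else .bot
  | .conj α β => if NExp.sat T (NExp.conj α β) then .conj (nRedPos T α) (nRedPos T β) else .bot
  | .disj α β => if NExp.sat T (NExp.disj α β) then .disj (nRedPos T α) (nRedPos T β) else .bot
  | .dneg α => if NExp.sat T (NExp.dneg α) then .dneg (nRedPos T α) else .bot
  | .xneg α => if NExp.sat T (NExp.xneg α) then .xneg (nRedNeg T α) else .bot

/-- Generalized Ferraris reduct `F^T₋` of a nested expression. -/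
noncomputable def nRedNeg (T : Set (XLit At)) : NExp At → NExp At
  | .top => .top
  | .bot => .bot
  | .atom p => if XLit.neg p ∈ T then .atom p else .top
  | .conj α β => if NExp.fals T (NExp.conj α β) then .conj (nRedNeg T α) (nRedNeg T β) else .top
  | .disj α β => if NExp.fals T (NExp.disj α β) then .disj (nRedNeg T α) (nRedNeg T β) else .top
  | .dneg α => if NExp.fals T (NExp.dneg α) then .bot else .top
  | .xneg α => if NExp.fals T (NExp.xneg α) then .xneg (nRedPos T α) else .top
end

/-- The five-valued valuation `M(φ)` of `M = ⟨H,T⟩`. -/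
noncomputable def val (H T : Set (XLit At)) : Frm At → ℤ
  | .atom p =>
      if XLit.pos p ∈ H then 2
      else if XLit.neg p ∈ H then -2
      else if XLit.pos p ∈ T then 1
      else if XLit.neg p ∈ T then -1
      else 0
  | .bot => -2
  | .conj φ ψ => min (val H T φ) (val H T ψ)
  | .disj φ ψ => max (val H T φ) (val H T ψ)
  | .impl φ ψ => if val H T φ ≤ max (val H T ψ) 0 then 2 else val H T ψ
  | .xneg φ => - val H T φ


theorem persist {H T : Set (XLit At)} (h : H ⊆ T) (φ : Frm At) :
    (Sat H T φ → Sat T T φ) ∧ (Fals H T φ → Fals T T φ) := by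
  induction φ with
  | atom p => simp only [Sat, Fals]; exact ⟨fun a => h a, fun a => h a⟩
  | bot => simp [Sat, Fals]
  | conj a b iha ihb => simp only [Sat, Fals]; tauto
  | disj a b iha ihb => simp only [Sat, Fals]; tauto
  | impl a b iha ihb => simp only [Sat, Fals]; tauto
  | xneg a iha => simp only [Sat, Fals]; tauto

/-- The formula of an explicit literal. -/
def litF : XLit At → Frm At
  | .pos p => .atom p
  | .neg p => .xneg (.atom p)

theorem sat_litF (H T : Set (XLit At)) (l : XLit At) : Sat H T (litF l) ↔ l ∈ H := by
  cases l <;> simp [litF, Sat, Fals]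

theorem half {α β : Frm At}
    (h : ∀ (Δ : Set (Frm At)) (T : Set (XLit At)),
        EqModel ({α} ∪ Δ) T ↔ EqModel ({β} ∪ Δ) T)
    {H T : Set (XLit At)} (hH : Consistent H) (hT : Consistent T) (hs : H ⊆ T)
    (ha : Sat H T α) : Sat H T β := by
  have hTa : Sat T T α := (persist hs α).1 ha
  have hTb : Sat T T β := by
    have h1 : EqModel ({α} ∪ litF '' T) T := by
      refine ⟨hT, ?_, ?_⟩
      · rintro φ (rfl | ⟨l, hl, rfl⟩)
        · exact hTa
        · exact (sat_litF _ _ _).2 hl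
      · rintro ⟨K, -, hK, hsat⟩
        exact hK.2 fun l hl => (sat_litF K T l).1 (hsat _ (Or.inr ⟨l, hl, rfl⟩))
    exact ((h _ _).1 h1).2.1 β (Or.inl rfl)
  by_contra hb
  have hne : H ≠ T := by
    rintro rfl
    exact hb hTb
  let Δ : Set (Frm At) := litF '' H ∪
    {φ | ∃ l l', l ∈ T \ H ∧ l' ∈ T \ H ∧ φ = Frm.impl (litF l) (litF l')}
  have h1 : EqModel ({β} ∪ Δ) T := by
    refine ⟨hT, ?_, ?_⟩
    · rintro φ (rfl | ⟨l, hl, rfl⟩ | ⟨l, l', hl, hl', rfl⟩)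
      · exact hTb
      · exact (sat_litF _ _ _).2 (hs hl)
      · simp only [Sat, sat_litF]
        exact ⟨fun _ => hl'.1, fun _ => hl'.1⟩
    · rintro ⟨K, -, hK, hsat⟩
      have hHK : H ⊆ K := fun l hl =>
        (sat_litF K T l).1 (hsat _ (Or.inr (Or.inl ⟨l, hl, rfl⟩)))
      by_cases hKH : K ⊆ H
      · have : K = H := Set.Subset.antisymm hKH hHK
        subst this
        exact hb (hsat β (Or.inl rfl))
      · obtain ⟨l, hlK, hlH⟩ := Set.not_subset.1 hKH
        refine hK.2 fun l' hl' => ?_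
        by_cases hl'H : l' ∈ H
        · exact hHK hl'H
        · have := hsat (Frm.impl (litF l) (litF l'))
            (Or.inr (Or.inr ⟨l, l', ⟨hK.1 hlK, hlH⟩, ⟨hl', hl'H⟩, rfl⟩))
          simp only [Sat, sat_litF] at this
          exact this.1 hlK
  refine ((h _ _).2 h1).2.2 ⟨H, hH, hs.ssubset_of_ne hne, ?_⟩
  rintro φ (rfl | ⟨l, hl, rfl⟩ | ⟨l, l', hl, hl', rfl⟩)
  · exact ha
  · exact (sat_litF _ _ _).2 hl
  · simp only [Sat, sat_litF]
    exact ⟨fun x => absurd x hl.2, fun _ => hl'.1⟩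

theorem eq_mono {α β : Frm At} (h : ∀ H T : Set (XLit At), Consistent H → Consistent T → H ⊆ T →
    (Sat H T α ↔ Sat H T β)) (Δ : Set (Frm At)) (T : Set (XLit At))
    (hm : EqModel ({α} ∪ Δ) T) : EqModel ({β} ∪ Δ) T := by
  obtain ⟨hT, hs, hn⟩ := hm
  refine ⟨hT, ?_, ?_⟩
  · rintro φ (rfl | hφ)
    · exact (h T T hT hT subset_rfl).1 (hs α (Or.inl rfl))
    · exact hs φ (Or.inr hφ)
  · rintro ⟨K, hKc, hK, hsat⟩
    refine hn ⟨K, hKc, hK, ?_⟩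
    rintro φ (rfl | hφ)
    · exact (h K T hKc hT hK.1).2 (hsat β (Or.inl rfl))
    · exact hsat φ (Or.inr hφ)

/-- formulas `α` and `β` are strongly equivalent (for every theory
`Δ`, the theories `{α} ∪ Δ` and `{β} ∪ Δ` have the same equilibrium models) iff
`α ↔ β` is X5-valid. -/
theorem stmt18 (At : Type) (α β : Frm At) :
    (∀ (Δ : Set (Frm At)) (T : Set (XLit At)),
        EqModel ({α} ∪ Δ) T ↔ EqModel ({β} ∪ Δ) T) ↔
      X5Valid (Frm.iff α β) := by
  constructor
  · intro h H T hH hT hs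
    have h' := fun Δ T => (h Δ T).symm
    simp only [Frm.iff, Sat]
    exact ⟨⟨half h hH hT hs, half h hT hT subset_rfl⟩,
      ⟨half h' hH hT hs, half h' hT hT subset_rfl⟩⟩
  · intro hv Δ T
    have key : ∀ H T : Set (XLit At), Consistent H → Consistent T → H ⊆ T →
        (Sat H T α ↔ Sat H T β) := by
      intro H T hH hT hs
      have := hv H T hH hT hs
      simp only [Frm.iff, Sat] at this
      exact ⟨this.1.1, this.2.1⟩
    exact ⟨eq_mono key Δ T, eq_mono (fun H T a b c => (key H T a b c).symm) Δ T⟩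

end X5Paper
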